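/- arXiv:1207.1900 — 4 statements merged into one kernel-verified Lean document; each statement's English description precedes it below -/
import Mathlib

section
/- (Merzljakov-type formal solutions) Let F be the free group with finite basis A, |A| ≥ 2, let X = {x₁,…,xₙ} and Y = {y₁,…,yₘ} be tuples of variables, and let U₁,…,Uₛ and V be elements of the free group on X ∪ Y ∪ A (group words in the variables and constants). Suppose that for every tuple (a₁,…,aₙ) of elements of F there exists a tuple (b₁,…,bₘ) of elements of F such that Uᵢ(a,b) = 1 in F for all i = 1,…,s and V(a,b) ≠ 1 in F. Then there exist elements w₁,…,wₘ of the free group F(X ∪ A) on X ∪ A (equivalently, of the free product F(X) ∗ F(A)) such that the homomorphism from the free group on X ∪ Y ∪ A to F(X ∪ A) sending each xⱼ and each a ∈ A to itself and each yⱼ to wⱼ sends each Uᵢ to the identity element of F(X ∪ A) and sends V to a nontrivial element of F(X ∪ A). -/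
/-- The evaluation homomorphism `F(X ∪ Y ∪ A) →* F(A)` sending the variables
`xⱼ ↦ aⱼ`, `yⱼ ↦ bⱼ` and each constant `a ∈ A` to the corresponding basis element
of the free group `F = F(A)`. -/
def evalWord {n m r : ℕ} (a : Fin n → FreeGroup (Fin r)) (b : Fin m → FreeGroup (Fin r)) :
    FreeGroup ((Fin n ⊕ Fin m) ⊕ Fin r) →* FreeGroup (Fin r) :=
  FreeGroup.lift (Sum.elim (Sum.elim a b) FreeGroup.of)

/-- The substitution homomorphism `F(X ∪ Y ∪ A) →* F(X ∪ A)` sending each `xⱼ` and each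
constant `a ∈ A` to itself, and each `yⱼ` to the word `w j ∈ F(X ∪ A)`. -/
def substWord {n m r : ℕ} (w : Fin m → FreeGroup (Fin n ⊕ Fin r)) :
    FreeGroup ((Fin n ⊕ Fin m) ⊕ Fin r) →* FreeGroup (Fin n ⊕ Fin r) :=
  FreeGroup.lift
    (Sum.elim (Sum.elim (fun x => FreeGroup.of (Sum.inl x)) w)
      (fun c => FreeGroup.of (Sum.inr c)))

/-!
Regard `F(A)` as the free product of the infinite cyclic groups `⟨a⟩`, `a ∈ A`. Replacing every
syllable `a ^ k` of a normal form by a prescribed element of a group `H`, compatibly with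
inversion, gives a map `F(A) → H` that fails to respect a product only at the one place where two
syllables merge. So, whatever the values of the variables, this map commutes with the evaluation of
a given word as soon as boundedly many exponents are replaced as a homomorphism would replace them,
the bound depending on the word alone.

Give each variable `x` the value `a₀ ^ e₀ a₁ a₀ ^ e₁ a₁ ⋯`, with more exponents than this bound and
all exponents distinct for all variables, and take a solution `b` for these values. In each value
some `a₀ ^ eₜ` is unconstrained. Replacing it by the element of `F(X ∪ A)` that turns the value
into `x`, and every other `a ^ k` by itself, gives a map `F(A) → F(X ∪ A)` under which `b` becomes
a formal solution. The map is injective, as sending each `x` back to its value is a left inverse;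
hence `V` stays nontrivial.
-/

open Monoid Function

section SyllableProd

variable {ι : Type*} {G : ι → Type*} {H : Type*} [Monoid H]

/-- The product in `H` of the images under `f` of a list of syllables. No `f i` is assumed to be a
homomorphism. -/
def syllableProd (f : ∀ i, G i → H) (l : List (Σ i, G i)) : H :=
  (l.map fun p => f p.1 p.2).prod

@[simp]
lemma syllableProd_nil (f : ∀ i, G i → H) : syllableProd f [] = 1 := rfl

@[simp]
lemma syllableProd_cons (f : ∀ i, G i → H) (p : Σ i, G i) (l : List (Σ i, G i)) :
    syllableProd f (p :: l) = f p.1 p.2 * syllableProd f l := by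
  simp [syllableProd]

@[simp]
lemma syllableProd_append (f : ∀ i, G i → H) (l₁ l₂ : List (Σ i, G i)) :
    syllableProd f (l₁ ++ l₂) = syllableProd f l₁ * syllableProd f l₂ := by
  simp [syllableProd]

lemma syllableProd_flatMap {τ : Type*} (f : ∀ i, G i → H) (s : τ → List (Σ i, G i))
    (l : List τ) :
    syllableProd f (l.flatMap s) = (l.map fun a => syllableProd f (s a)).prod := by
  induction l with
  | nil => simp
  | cons a l ih => simp [ih]

lemma map_syllableProd {N : Type*} [Monoid N] (φ : H →* N) (f : ∀ i, G i → H)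
    (l : List (Σ i, G i)) :
    φ (syllableProd f l) = syllableProd (fun i x => φ (f i x)) l := by
  simp [syllableProd, map_list_prod, comp_def]

end SyllableProd

section Monoids

variable {ι : Type*} {G : ι → Type*} [∀ i, Monoid (G i)] {H : Type*} [Monoid H]

/-- A list of syllables is reduced if no syllable is trivial and neighbouring syllables lie in
different factors; these are the underlying lists of `Monoid.CoprodI.Word`. -/
structure IsReducedSyllables (l : List (Σ i, G i)) : Prop where
  ne_one : ∀ p ∈ l, p.2 ≠ 1
  isChain : l.IsChain fun p q => p.1 ≠ q.1

namespace IsReducedSyllables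

variable {l l₁ l₂ : List (Σ i, G i)} {i j : ι} {x : G i} {y : G j}

lemma nil : IsReducedSyllables ([] : List (Σ i, G i)) := ⟨by simp, by simp⟩

lemma singleton (hx : x ≠ 1) : IsReducedSyllables [(⟨i, x⟩ : Σ i, G i)] := ⟨by simpa, by simp⟩

lemma of_append_left (h : IsReducedSyllables (l₁ ++ l₂)) : IsReducedSyllables l₁ :=
  ⟨fun p hp => h.ne_one p (List.mem_append_left _ hp), h.isChain.left_of_append⟩

lemma of_append_right (h : IsReducedSyllables (l₁ ++ l₂)) : IsReducedSyllables l₂ :=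
  ⟨fun p hp => h.ne_one p (List.mem_append_right _ hp), h.isChain.right_of_append⟩

lemma append_cons (h₁ : IsReducedSyllables (l₁ ++ [⟨i, x⟩]))
    (h₂ : IsReducedSyllables (⟨j, y⟩ :: l₂)) (hij : i ≠ j) :
    IsReducedSyllables ((l₁ ++ [⟨i, x⟩]) ++ ⟨j, y⟩ :: l₂) where
  ne_one p hp := (List.mem_append.1 hp).elim (h₁.ne_one p) (h₂.ne_one p)
  isChain := by
    refine List.isChain_append.2 ⟨h₁.isChain, h₂.isChain, ?_⟩
    simpa using hij

lemma append_mul_cons {y : G i} (h₁ : IsReducedSyllables (l₁ ++ [⟨i, x⟩]))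
    (h₂ : IsReducedSyllables (⟨i, y⟩ :: l₂)) (hxy : x * y ≠ 1) :
    IsReducedSyllables (l₁ ++ ⟨i, x * y⟩ :: l₂) where
  ne_one p hp := by
    rcases List.mem_append.1 hp with hp | hp
    · exact h₁.of_append_left.ne_one p hp
    rcases List.mem_cons.1 hp with rfl | hp
    · exact hxy
    · exact h₂.ne_one p (List.mem_cons_of_mem _ hp)
  isChain := by
    obtain ⟨chain₁, -, last_ne⟩ := List.isChain_append.1 h₁.isChain
    have chain₂ := List.isChain_cons.1 h₂.isChain
    refine List.isChain_append.2 ⟨chain₁, List.isChain_cons.2 chain₂, ?_⟩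
    simpa using last_ne

end IsReducedSyllables

open Classical in
/-- The extension of a family of arbitrary maps `f i : G i → H` to the free product, evaluating
`f` on each syllable of the normal form. It need not be a homomorphism. -/
noncomputable def syllableExtension (f : ∀ i, G i → H) (c : CoprodI G) : H :=
  syllableProd f (CoprodI.Word.equiv c).toList

lemma exists_isReducedSyllables_syllableProd_eq (c : CoprodI G) :
    ∃ l, IsReducedSyllables l ∧ syllableProd (fun _ => CoprodI.of) l = c := by
  classical
  exact ⟨(CoprodI.Word.equiv c).toList, ⟨(CoprodI.Word.equiv c).ne_one,
    (CoprodI.Word.equiv c).chain_ne⟩, CoprodI.Word.equiv.symm_apply_apply c⟩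

lemma syllableExtension_syllableProd (f : ∀ i, G i → H) {l : List (Σ i, G i)}
    (hl : IsReducedSyllables l) :
    syllableExtension f (syllableProd (fun _ => CoprodI.of) l) = syllableProd f l := by
  classical
  have normal_form : CoprodI.Word.equiv (syllableProd (fun _ => CoprodI.of) l) =
      ⟨l, hl.ne_one, hl.isChain⟩ :=
    CoprodI.Word.equiv.apply_symm_apply ⟨l, hl.ne_one, hl.isChain⟩
  rw [syllableExtension, normal_form]

lemma syllableExtension_one (f : ∀ i, G i → H) : syllableExtension f 1 = 1 :=
  syllableExtension_syllableProd f IsReducedSyllables.nil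

lemma map_syllableExtension {N : Type*} [Monoid N] (φ : H →* N) {f : ∀ i, G i → H}
    {g : ∀ i, G i →* N} (hfg : ∀ i x, φ (f i x) = g i x) (c : CoprodI G) :
    φ (syllableExtension f c) = CoprodI.lift g c := by
  obtain ⟨l, hl, rfl⟩ := exists_isReducedSyllables_syllableProd_eq c
  simp only [syllableExtension_syllableProd f hl, map_syllableProd, hfg, CoprodI.lift_of]

end Monoids

section Groups

variable {ι : Type*} {G : ι → Type*} [∀ i, Group (G i)] {H : Type*} [Group H]

/-- The formal inverse of a list of syllables. -/
def invSyllables (l : List (Σ i, G i)) : List (Σ i, G i) :=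
  (l.map fun p => ⟨p.1, p.2⁻¹⟩).reverse

lemma syllableProd_invSyllables {f : ∀ i, G i → H} (hf : ∀ i x, f i x⁻¹ = (f i x)⁻¹)
    (l : List (Σ i, G i)) : syllableProd f (invSyllables l) = (syllableProd f l)⁻¹ := by
  simp [syllableProd, invSyllables, List.prod_inv_reverse, comp_def, hf]

lemma isReducedSyllables_invSyllables {l : List (Σ i, G i)} (h : IsReducedSyllables l) :
    IsReducedSyllables (invSyllables l) where
  ne_one p hp := by
    obtain ⟨q, hq, rfl⟩ := List.mem_map.1 (List.mem_reverse.1 hp)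
    exact inv_ne_one.2 (h.ne_one q hq)
  isChain := by
    rw [invSyllables, List.isChain_reverse, List.isChain_map]
    exact h.isChain.imp fun _ _ hne => hne.symm

lemma syllableExtension_inv {f : ∀ i, G i → H} (hf : ∀ i x, f i x⁻¹ = (f i x)⁻¹)
    (c : CoprodI G) : syllableExtension f c⁻¹ = (syllableExtension f c)⁻¹ := by
  obtain ⟨l, hl, rfl⟩ := exists_isReducedSyllables_syllableProd_eq c
  rw [← syllableProd_invSyllables fun _ => map_inv _,
    syllableExtension_syllableProd f (isReducedSyllables_invSyllables hl),
    syllableExtension_syllableProd f hl, syllableProd_invSyllables hf]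

lemma IsReducedSyllables.exists_cancellation {l₁ l₂ : List (Σ i, G i)}
    (h₁ : IsReducedSyllables l₁) (h₂ : IsReducedSyllables l₂) :
    ∃ p e q, l₁ = p ++ e ∧ l₂ = invSyllables e ++ q ∧
      (IsReducedSyllables (p ++ q) ∨ ∃ p' i x y q', p = p' ++ [⟨i, x⟩] ∧ q = ⟨i, y⟩ :: q' ∧
        IsReducedSyllables (p' ++ ⟨i, x * y⟩ :: q')) := by
  induction l₁ using List.reverseRecOn generalizing l₂ with
  | nil => exact ⟨[], [], l₂, rfl, rfl, .inl h₂⟩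
  | append_singleton l₁ last ih =>
    rcases l₂ with _ | ⟨⟨j, y⟩, l₂⟩
    · exact ⟨l₁ ++ [last], [], [], by simp, rfl, .inl (by simpa using h₁)⟩
    obtain ⟨i, x⟩ := last
    by_cases hij : i = j
    · subst hij
      by_cases hxy : x * y = 1
      · obtain ⟨p, e, q, rfl, rfl, hpq⟩ :=
          ih h₁.of_append_left (h₂.of_append_right (l₁ := [_]))
        refine ⟨p, e ++ [⟨i, x⟩], q, by simp, ?_, hpq⟩
        simp [invSyllables, eq_inv_of_mul_eq_one_right hxy]
      · exact ⟨l₁ ++ [⟨i, x⟩], [], ⟨i, y⟩ :: l₂, by simp, rfl,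
          .inr ⟨l₁, i, x, y, l₂, rfl, rfl, h₁.append_mul_cons h₂ hxy⟩⟩
    · exact ⟨l₁ ++ [⟨i, x⟩], [], ⟨j, y⟩ :: l₂, by simp, rfl, .inl (h₁.append_cons h₂ hij)⟩

lemma syllableExtension_mul_or_exists_merge (c d : CoprodI G) :
    (∀ f : ∀ i, G i → H, (∀ i x, f i x⁻¹ = (f i x)⁻¹) →
      syllableExtension f (c * d) = syllableExtension f c * syllableExtension f d) ∨
    ∃ i, ∃ x y : G i, ∀ f : ∀ i, G i → H, (∀ i x, f i x⁻¹ = (f i x)⁻¹) →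
      f i (x * y) = f i x * f i y →
      syllableExtension f (c * d) = syllableExtension f c * syllableExtension f d := by
  obtain ⟨l₁, h₁, rfl⟩ := exists_isReducedSyllables_syllableProd_eq c
  obtain ⟨l₂, h₂, rfl⟩ := exists_isReducedSyllables_syllableProd_eq d
  simp only [syllableExtension_syllableProd _ h₁, syllableExtension_syllableProd _ h₂]
  obtain ⟨p, e, q, rfl, rfl, hpq | ⟨p, i, x, y, q, rfl, rfl, hpq⟩⟩ := h₁.exists_cancellation h₂
  · left
    intro f hf
    convert syllableExtension_syllableProd f hpq using 1
    · simp [syllableProd_invSyllables, mul_assoc]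
    · simp [syllableProd_invSyllables hf, mul_assoc]
  · refine .inr ⟨i, x, y, fun f hf hxy => ?_⟩
    convert syllableExtension_syllableProd f hpq using 1
    · simp [syllableProd_invSyllables, mul_assoc]
    · simp [syllableProd_invSyllables hf, mul_assoc, hxy]

end Groups

section PowerSubstitution

variable {α : Type*} {H : Type*} [Group H]

/-- The canonical homomorphism from the free group to the free product of the infinite cyclic groups
generated by its basis elements. -/
def freeGroupToCoprodInt : FreeGroup α →* CoprodI fun _ : α => Multiplicative ℤ :=
  FreeGroup.lift fun i => CoprodI.of (i := i) (Multiplicative.ofAdd 1)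

/-- The replacement for the syllable with exponent `x` over the basis element `i`: `E i k` for
`x = k > 0` and `(E i k)⁻¹` for `x = -k < 0`, so that it is always compatible with inversion. -/
def signedSyllable (E : α → ℕ → H) (i : α) (x : Multiplicative ℤ) : H :=
  E i x.toAdd.natAbs ^ x.toAdd.sign

/-- Replaces each maximal power of a basis element `i` in the reduced form of `c` by `E i k` if its
exponent is `k > 0` and by `(E i k)⁻¹` if it is `-k < 0`. The value `E i 0` is irrelevant. -/
noncomputable def powerSubst (E : α → ℕ → H) (c : FreeGroup α) : H :=
  syllableExtension (signedSyllable E) (freeGroupToCoprodInt c)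

lemma signedSyllable_inv (E : α → ℕ → H) (i : α) (x : Multiplicative ℤ) :
    signedSyllable E i x⁻¹ = (signedSyllable E i x)⁻¹ := by
  simp [signedSyllable]

lemma signedSyllable_eq_zpow {E : α → ℕ → H} {g : H} {i : α} {x : Multiplicative ℤ}
    (hE : E i x.toAdd.natAbs = g ^ x.toAdd.natAbs) : signedSyllable E i x = g ^ x.toAdd := by
  rw [signedSyllable, hE, ← zpow_natCast, ← zpow_mul, mul_comm, Int.sign_mul_natAbs]

lemma signedSyllable_ofAdd_natCast (E : α → ℕ → H) (i : α) {k : ℕ} (hk : k ≠ 0) :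
    signedSyllable E i (Multiplicative.ofAdd (k : ℤ)) = E i k := by
  simp [signedSyllable, Int.sign_natCast_of_ne_zero hk]

lemma freeGroupToCoprodInt_of_zpow (i : α) (x : ℤ) :
    freeGroupToCoprodInt (FreeGroup.of i ^ x) = CoprodI.of (i := i) (Multiplicative.ofAdd x) := by
  rw [map_zpow, freeGroupToCoprodInt, FreeGroup.lift_apply_of, ← map_zpow, ← ofAdd_zsmul]
  simp

lemma lift_zpowersHom_freeGroupToCoprodInt (c : FreeGroup α) :
    CoprodI.lift (fun i => zpowersHom _ (FreeGroup.of i)) (freeGroupToCoprodInt c) = c := by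
  have h : (CoprodI.lift fun i : α => zpowersHom _ (FreeGroup.of i)).comp
      freeGroupToCoprodInt = MonoidHom.id _ := by
    ext i
    simp [freeGroupToCoprodInt]
  exact DFunLike.congr_fun h c

lemma powerSubst_syllableProd (E : α → ℕ → H) {l : List (Σ _ : α, Multiplicative ℤ)}
    (hl : IsReducedSyllables l) :
    powerSubst E (syllableProd (fun i x => FreeGroup.of i ^ x.toAdd) l) =
      syllableProd (signedSyllable E) l := by
  simp only [powerSubst, map_syllableProd, freeGroupToCoprodInt_of_zpow, ofAdd_toAdd]
  exact syllableExtension_syllableProd _ hl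

@[simp]
lemma powerSubst_one (E : α → ℕ → H) : powerSubst E 1 = 1 := by
  rw [powerSubst, map_one, syllableExtension_one]

lemma powerSubst_inv (E : α → ℕ → H) (c : FreeGroup α) :
    powerSubst E c⁻¹ = (powerSubst E c)⁻¹ := by
  rw [powerSubst, map_inv, syllableExtension_inv (signedSyllable_inv E), powerSubst]

lemma powerSubst_of (E : α → ℕ → H) (i : α) : powerSubst E (FreeGroup.of i) = E i 1 := by
  have h := powerSubst_syllableProd E (IsReducedSyllables.singleton (G := fun _ => Multiplicative ℤ)
    (i := i) (x := Multiplicative.ofAdd 1) (by decide))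
  simpa [signedSyllable] using h

lemma map_powerSubst {E : α → ℕ → H} {ψ : H →* FreeGroup α}
    (hψ : ∀ i k, ψ (E i k) = FreeGroup.of i ^ k) (c : FreeGroup α) : ψ (powerSubst E c) = c := by
  conv_rhs => rw [← lift_zpowersHom_freeGroupToCoprodInt c]
  refine map_syllableExtension ψ (fun i x => ?_) _
  have h : signedSyllable (fun i k => ψ (E i k)) i x = FreeGroup.of i ^ x.toAdd :=
    signedSyllable_eq_zpow (hψ i _)
  simpa [signedSyllable] using h

lemma exists_card_le_powerSubst_mul (g : α → H) (c d : FreeGroup α) :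
    ∃ B : Finset ℕ, B.card ≤ 3 ∧ ∀ E : α → ℕ → H, (∀ i, ∀ k ∈ B, E i k = g i ^ k) →
      powerSubst E (c * d) = powerSubst E c * powerSubst E d := by
  simp only [powerSubst, map_mul]
  obtain h | ⟨i, x, y, h⟩ :=
    syllableExtension_mul_or_exists_merge (H := H) (freeGroupToCoprodInt c) (freeGroupToCoprodInt d)
  · exact ⟨∅, by simp, fun E _ => h _ (signedSyllable_inv E)⟩
  · refine ⟨{x.toAdd.natAbs, y.toAdd.natAbs, (x * y).toAdd.natAbs}, Finset.card_le_three,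
      fun E hE => h _ (signedSyllable_inv E) ?_⟩
    rw [signedSyllable_eq_zpow (hE i _ (by simp)), signedSyllable_eq_zpow (hE i _ (by simp)),
      signedSyllable_eq_zpow (hE i _ (by simp)), toAdd_mul, zpow_add]

/-- `N` must not depend on `v`: the values of the variables are chosen only once it is known. -/
lemma exists_card_le_powerSubst_lift {τ : Type*} (g : α → H) (W : FreeGroup τ) :
    ∃ N : ℕ, ∀ v : τ → FreeGroup α, ∃ B : Finset ℕ, B.card ≤ N ∧
      ∀ E : α → ℕ → H, (∀ i, ∀ k ∈ B, E i k = g i ^ k) →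
        powerSubst E (FreeGroup.lift v W) = FreeGroup.lift (fun z => powerSubst E (v z)) W := by
  classical
  induction W using FreeGroup.induction_on with
  | C1 => exact ⟨0, fun v => ⟨∅, by simp, by simp⟩⟩
  | of z => exact ⟨0, fun v => ⟨∅, by simp, by simp⟩⟩
  | inv_of z => exact ⟨0, fun v => ⟨∅, by simp, by simp [powerSubst_inv]⟩⟩
  | mul W₁ W₂ ih₁ ih₂ =>
    obtain ⟨N₁, ih₁⟩ := ih₁
    obtain ⟨N₂, ih₂⟩ := ih₂
    refine ⟨N₁ + N₂ + 3, fun v => ?_⟩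
    obtain ⟨B₁, hB₁, h₁⟩ := ih₁ v
    obtain ⟨B₂, hB₂, h₂⟩ := ih₂ v
    obtain ⟨B₃, hB₃, h₃⟩ :=
      exists_card_le_powerSubst_mul g (FreeGroup.lift v W₁) (FreeGroup.lift v W₂)
    refine ⟨B₁ ∪ B₂ ∪ B₃, ?_, fun E hE => ?_⟩
    · grind [Finset.card_union_le]
    · rw [map_mul, map_mul, h₃ E (by grind), h₁ E (by grind), h₂ E (by grind)]

lemma exists_card_le_forall_powerSubst_lift {τ κ : Type*} [Finite κ] (g : α → H)
    (W : κ → FreeGroup τ) :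
    ∃ N : ℕ, ∀ v : τ → FreeGroup α, ∃ B : Finset ℕ, B.card ≤ N ∧
      ∀ E : α → ℕ → H, (∀ i, ∀ k ∈ B, E i k = g i ^ k) → ∀ o,
        powerSubst E (FreeGroup.lift v (W o)) =
          FreeGroup.lift (fun z => powerSubst E (v z)) (W o) := by
  classical
  cases nonempty_fintype κ
  choose N hN using fun o => exists_card_le_powerSubst_lift g (W o)
  refine ⟨∑ o, N o, fun v => ?_⟩
  choose B hB h using fun o => hN o v
  refine ⟨Finset.univ.biUnion B, ?_, fun E hE o => h o E fun i k hk => hE i k ?_⟩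
  · exact Finset.card_biUnion_le.trans (Finset.sum_le_sum fun o _ => hB o)
  · exact Finset.mem_biUnion.2 ⟨o, Finset.mem_univ o, hk⟩

end PowerSubstitution

section TestWord

/-- The product `p 0 * y * p 1 * y * ⋯ * p (K - 1) * y`. With different powers of one basis element
for `p` and another basis element for `y`, it is the value at which the variables are tested. -/
def testWord {M : Type*} [Monoid M] (p : ℕ → M) (y : M) (K : ℕ) : M :=
  ((List.range K).map fun s => p s * y).prod

lemma map_testWord {M N : Type*} [Monoid M] [Monoid N] (φ : M →* N) (p : ℕ → M) (y : M) (K : ℕ) :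
    φ (testWord p y K) = testWord (φ ∘ p) (φ y) K := by
  simp [testWord, map_list_prod, comp_def]

variable {α H : Type*} [Group H]

lemma bijective_testWord_update (p : ℕ → H) (y : H) {t K : ℕ} (ht : t < K) :
    Bijective fun u => testWord (update p t u) y K := by
  obtain ⟨l₁, l₂, hl⟩ := List.append_of_mem (List.mem_range.2 ht)
  have nodup : (l₁ ++ t :: l₂).Nodup := hl ▸ List.nodup_range
  have map_update (l : List ℕ) (hl : t ∉ l) (u : H) :
      l.map (fun s => update p t u s * y) = l.map fun s => p s * y :=
    List.map_congr_left fun s hs => by rw [update_of_ne (ne_of_mem_of_not_mem hs hl)]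
  convert ((Equiv.mulLeft (l₁.map fun s => p s * y).prod).trans
    (Equiv.mulRight (y * (l₂.map fun s => p s * y).prod))).bijective using 2 with u
  simp [testWord, hl, map_update l₁ (by grind), map_update l₂ (by grind), mul_assoc]

lemma map_eq_of_map_testWord_update_eq {N : Type*} [Group N] {φ : H →* N} {p : ℕ → H} {y u : H}
    {t K : ℕ} (ht : t < K) (h : φ (testWord (update p t u) y K) = testWord (φ ∘ p) (φ y) K) :
    φ u = φ (p t) := by
  apply (bijective_testWord_update (φ ∘ p) (φ y) ht).injective
  change testWord (update (φ ∘ p) t (φ u)) _ _ = testWord (update (φ ∘ p) t ((φ ∘ p) t)) _ _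
  rw [update_eq_self, ← h, map_testWord, comp_update]

lemma isReducedSyllables_flatMap_pair {i j : α} (hij : i ≠ j) {e : ℕ → ℕ} (he : ∀ s, e s ≠ 0)
    (l : List ℕ) :
    IsReducedSyllables (G := fun _ => Multiplicative ℤ) (l.flatMap fun s =>
      [⟨i, Multiplicative.ofAdd (e s : ℤ)⟩, ⟨j, Multiplicative.ofAdd 1⟩]) where
  ne_one p hp := by
    simp only [List.mem_flatMap, List.mem_cons, List.not_mem_nil, or_false] at hp
    obtain ⟨s, -, rfl | rfl⟩ := hp
    · exact fun h => he s (by simpa using h)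
    · exact fun h => by simp at h
  isChain := by
    induction l with
    | nil => simp
    | cons s l ih => cases l <;> simp_all [hij.symm]

lemma powerSubst_testWord (E : α → ℕ → H) {i j : α} (hij : i ≠ j) {e : ℕ → ℕ}
    (he : ∀ s, e s ≠ 0) (K : ℕ) :
    powerSubst E (testWord (fun s => FreeGroup.of i ^ e s) (FreeGroup.of j) K) =
      testWord (fun s => E i (e s)) (E j 1) K := by
  have h := powerSubst_syllableProd E (isReducedSyllables_flatMap_pair hij he (List.range K))
  simp only [syllableProd_flatMap, syllableProd_cons, syllableProd_nil,
    signedSyllable_ofAdd_natCast E i (he _)] at h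
  simpa [testWord, signedSyllable] using h

end TestWord

section PerturbedPowers

variable {α ξ H : Type*} [Group H]

open Classical in
/-- The family of powers `(i, n) ↦ g i ^ n`, except that for `i = i₀` and every `x` the power with
exponent `k x` is replaced by `u x`. -/
noncomputable def perturbedPowers (g : α → H) (i₀ : α) (k : ξ → ℕ) (u : ξ → H) : α → ℕ → H :=
  update (fun i n => g i ^ n) i₀ (extend k u fun n => g i₀ ^ n)

variable (g : α → H) (i₀ : α) {k : ξ → ℕ} (u : ξ → H)

lemma perturbedPowers_of_ne {i : α} (hi : i ≠ i₀) (n : ℕ) :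
    perturbedPowers g i₀ k u i n = g i ^ n := by
  simp [perturbedPowers, hi]

lemma perturbedPowers_of_notMem_range (i : α) {n : ℕ} (hn : n ∉ Set.range k) :
    perturbedPowers g i₀ k u i n = g i ^ n := by
  obtain rfl | hi := eq_or_ne i i₀
  · simp [perturbedPowers, extend_apply' _ _ _ hn]
  · exact perturbedPowers_of_ne g i₀ u hi n

lemma perturbedPowers_apply (hk : Injective k) (x : ξ) :
    perturbedPowers g i₀ k u i₀ (k x) = u x := by
  simp [perturbedPowers, hk.extend_apply]

lemma map_perturbedPowers (hk : Injective k) {N : Type*} [Group N] (φ : H →* N)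
    (hu : ∀ x, φ (u x) = φ (g i₀) ^ k x) (i : α) (n : ℕ) :
    φ (perturbedPowers g i₀ k u i n) = φ (g i) ^ n := by
  by_cases hn : n ∈ Set.range k
  · obtain ⟨x, rfl⟩ := hn
    obtain rfl | hi := eq_or_ne i i₀
    · rw [perturbedPowers_apply g i u hk, hu]
    · rw [perturbedPowers_of_ne g i₀ u hi, map_pow]
  · rw [perturbedPowers_of_notMem_range g i₀ u i hn, map_pow]

lemma powerSubst_perturbedPowers_testWord {i₁ : α} (hi : i₀ ≠ i₁) {e : ξ → ℕ → ℕ}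
    (he : Injective (uncurry e)) (he₀ : ∀ x s, e x s ≠ 0) (K : ℕ) (t : ξ → ℕ) (x : ξ) :
    powerSubst (perturbedPowers g i₀ (fun x => e x (t x)) u)
        (testWord (fun s => FreeGroup.of i₀ ^ e x s) (FreeGroup.of i₁) K) =
      testWord (update (fun s => g i₀ ^ e x s) (t x) (u x)) (g i₁) K := by
  have he_inj {x x' : ξ} {s s' : ℕ} (h : e x s = e x' s') : x = x' ∧ s = s' :=
    Prod.ext_iff.1 (@he (x, s) (x', s') h)
  rw [powerSubst_testWord _ hi (he₀ x), perturbedPowers_of_ne g i₀ u hi.symm, pow_one]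
  congr 1 with s
  obtain rfl | hs := eq_or_ne s (t x)
  · rw [update_self]
    exact perturbedPowers_apply g i₀ u (fun x x' h => (he_inj h).1) x
  · rw [update_of_ne hs]
    refine perturbedPowers_of_notMem_range g i₀ u i₀ ?_
    rintro ⟨x', hx'⟩
    obtain ⟨rfl, rfl⟩ := he_inj hx'
    exact hs rfl

end PerturbedPowers

section FormalSolutions

lemma exists_powerSubst_testWord_eq_of {α ξ : Type*} {i₀ i₁ : α} (hi : i₀ ≠ i₁)
    {e : ξ → ℕ → ℕ} (he : Injective (uncurry e)) (he₂ : ∀ x s, 2 ≤ e x s) {K : ℕ} {t : ξ → ℕ}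
    (ht : ∀ x, t x < K) :
    ∃ E : α → ℕ → FreeGroup (ξ ⊕ α),
      (∀ i n, (∀ x, e x (t x) ≠ n) → E i n = FreeGroup.of (.inr i) ^ n) ∧
      (∀ x, powerSubst E (testWord (fun s => FreeGroup.of i₀ ^ e x s) (FreeGroup.of i₁) K) =
        FreeGroup.of (.inl x)) ∧
      (∀ i, powerSubst E (FreeGroup.of i) = FreeGroup.of (.inr i)) ∧
      Injective (powerSubst E) := by
  let g : α → FreeGroup (ξ ⊕ α) := fun i => FreeGroup.of (.inr i)
  let a : ξ → FreeGroup α := fun x =>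
    testWord (fun s => FreeGroup.of i₀ ^ e x s) (FreeGroup.of i₁) K
  let ψ : FreeGroup (ξ ⊕ α) →* FreeGroup α := FreeGroup.lift (Sum.elim a FreeGroup.of)
  choose u hu using fun x =>
    (bijective_testWord_update (fun s => g i₀ ^ e x s) (g i₁) (ht x)).surjective
      (FreeGroup.of (.inl x))
  have hψu (x : ξ) : ψ (u x) = ψ (g i₀) ^ e x (t x) := by
    rw [← map_pow]
    refine map_eq_of_map_testWord_update_eq (p := fun s => g i₀ ^ e x s) (y := g i₁) (ht x) ?_
    exact (congrArg ψ (hu x)).trans (by simp [ψ, a, g, comp_def])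
  have hk : Injective fun x => e x (t x) := fun x x' h =>
    (Prod.ext_iff.1 (@he (x, t x) (x', t x') h)).1
  refine ⟨perturbedPowers g i₀ (fun x => e x (t x)) u, fun i n hn => ?_, fun x => ?_, fun i => ?_,
    LeftInverse.injective (g := ψ) (map_powerSubst fun i n => ?_)⟩
  · exact perturbedPowers_of_notMem_range g i₀ u i (by simpa using hn)
  · rw [powerSubst_perturbedPowers_testWord g i₀ u hi he (fun x s => by grind)]
    exact hu x
  · rw [powerSubst_of, perturbedPowers_of_notMem_range g i₀ u i (by grind), pow_one]
  · rw [map_perturbedPowers g i₀ u hk ψ hψu]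
    simp [ψ, g]

lemma exists_lt_notMem_of_card_lt {β : Type*} {e : ℕ → β} (he : Injective e) {B : Finset β} {K : ℕ}
    (hB : B.card < K) : ∃ s < K, e s ∉ B := by
  classical
  obtain ⟨_, hk, hkB⟩ := Finset.exists_mem_notMem_of_card_lt_card
    (s := B) (t := (Finset.range K).image e) (by simpa [Finset.card_image_of_injective _ he])
  obtain ⟨s, hs, rfl⟩ := Finset.mem_image.1 hk
  exact ⟨s, Finset.mem_range.1 hs, hkB⟩

lemma exists_injective_uncurry_two_le (ξ : Type*) [Countable ξ] :
    ∃ e : ξ → ℕ → ℕ, Injective (uncurry e) ∧ ∀ x s, 2 ≤ e x s := by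
  obtain ⟨code, hcode⟩ := exists_injective_nat (ξ × ℕ)
  exact ⟨fun x s => code (x, s) + 2, fun z z' h => hcode (by simpa [uncurry] using h), by simp⟩

theorem merzljakov_formal_solutions_general {α ξ υ κ : Type*} [Nontrivial α] [Countable ξ]
    [Finite κ] (U : κ → FreeGroup ((ξ ⊕ υ) ⊕ α)) (V : FreeGroup ((ξ ⊕ υ) ⊕ α))
    (h : ∀ a : ξ → FreeGroup α, ∃ b : υ → FreeGroup α,
      (∀ o, FreeGroup.lift (Sum.elim (Sum.elim a b) FreeGroup.of) (U o) = 1) ∧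
        FreeGroup.lift (Sum.elim (Sum.elim a b) FreeGroup.of) V ≠ 1) :
    ∃ w : υ → FreeGroup (ξ ⊕ α),
      (∀ o, FreeGroup.lift (Sum.elim (Sum.elim (fun x => FreeGroup.of (.inl x)) w)
        fun c => FreeGroup.of (.inr c)) (U o) = 1) ∧
      FreeGroup.lift (Sum.elim (Sum.elim (fun x => FreeGroup.of (.inl x)) w)
        fun c => FreeGroup.of (.inr c)) V ≠ 1 := by
  obtain ⟨i₀, i₁, hi⟩ := exists_pair_ne α
  obtain ⟨e, he, he₂⟩ := exists_injective_uncurry_two_le ξ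
  obtain ⟨N, hN⟩ := exists_card_le_forall_powerSubst_lift
    (fun i : α => FreeGroup.of (Sum.inr i : ξ ⊕ α)) (fun o : Option κ => o.elim V U)
  let a : ξ → FreeGroup α := fun x =>
    testWord (fun s => FreeGroup.of i₀ ^ e x s) (FreeGroup.of i₁) (N + 1)
  obtain ⟨b, hU, hV⟩ := h a
  obtain ⟨B, hB, hcomm⟩ := hN (Sum.elim (Sum.elim a b) FreeGroup.of)
  choose t ht htB using fun x =>
    exists_lt_notMem_of_card_lt (he.comp (Prod.mk_right_injective x)) (Nat.lt_succ_of_le hB)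
  obtain ⟨E, hE, hEx, hEα, hE_inj⟩ := exists_powerSubst_testWord_eq_of hi he he₂ ht
  have subst_eq : (fun z => powerSubst E (Sum.elim (Sum.elim a b) FreeGroup.of z)) =
      Sum.elim (Sum.elim (fun x => FreeGroup.of (.inl x)) fun y => powerSubst E (b y))
        fun c => FreeGroup.of (.inr c) :=
    funext <| Sum.rec (Sum.rec hEx fun _ => rfl) hEα
  have hsubst := hcomm E fun i k hk => hE i k fun x hx => htB x (by simpa [← hx] using hk)
  rw [subst_eq] at hsubst
  refine ⟨fun y => powerSubst E (b y), fun o => ?_, fun hV' => hV (hE_inj ?_)⟩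
  · exact (hsubst (some o)).symm.trans (by simp [hU o])
  · exact (hsubst none).trans (hV'.trans (powerSubst_one E).symm)

end FormalSolutions

/-- Merzljakov-type formal solutions: if for every tuple `a` in the free group
`F = F(A)` (`|A| = r ≥ 2`) there is a tuple `b` in `F` with `Uᵢ(a, b) = 1` for all `i`
and `V(a, b) ≠ 1`, then there are formal solutions `w₁, …, w_m ∈ F(X ∪ A)` such that
substituting `yⱼ ↦ wⱼ` sends each `Uᵢ` to `1` and `V` to a nontrivial element
of `F(X ∪ A)`. -/
theorem merzljakov_formal_solutions (r n m s : ℕ) (hr : 2 ≤ r)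
    (U : Fin s → FreeGroup ((Fin n ⊕ Fin m) ⊕ Fin r))
    (V : FreeGroup ((Fin n ⊕ Fin m) ⊕ Fin r))
    (h : ∀ a : Fin n → FreeGroup (Fin r), ∃ b : Fin m → FreeGroup (Fin r),
      (∀ i, evalWord a b (U i) = 1) ∧ evalWord a b V ≠ 1) :
    ∃ w : Fin m → FreeGroup (Fin n ⊕ Fin r),
      (∀ i, substWord w (U i) = 1) ∧ substWord w V ≠ 1 := by
  have : Nontrivial (Fin r) := Fin.nontrivial_iff_two_le.2 hr
  exact merzljakov_formal_solutions_general U V h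
end

section
/- (Equational Noetherianity of free groups) Let F be a free group of finite rank with basis A, and let n be a natural number. For every set S of elements of the free group on {x₁,…,xₙ} ∪ A (a system of equations with constants in the variables x₁,…,xₙ), there exists a finite subset S₀ of S which is equivalent to S over F: for every tuple (a₁,…,aₙ) of elements of F, w(a₁,…,aₙ) = 1 in F for all w ∈ S₀ if and only if w(a₁,…,aₙ) = 1 in F for all w ∈ S. -/
/-- The evaluation homomorphism `F({x₁, …, xₙ} ∪ A) →* F(A)` sending each variable
`xⱼ ↦ aⱼ` and each constant `a ∈ A` to the corresponding basis element of the free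
group `F = F(A)`. -/
def evalEquation {n r : ℕ} (a : Fin n → FreeGroup (Fin r)) :
    FreeGroup (Fin n ⊕ Fin r) →* FreeGroup (Fin r) :=
  FreeGroup.lift (Sum.elim a FreeGroup.of)

/-!
Let `ρ : G → Mₘ(R)` be a faithful representation over a Noetherian commutative ring. Replacing each
variable of a word `w` and each inverse of a variable by a matrix of indeterminates, and each
constant by its image under `ρ`, turns `w` into a matrix over a polynomial ring in finitely many
indeterminates over `R`; a tuple solves `w = 1` iff the corresponding evaluation kills the ideal
generated by the entries of this matrix minus the identity. By Hilbert's basis theorem finitely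
many words generate the same ideal as the whole system, so `G` is equationally Noetherian.

A free group of any rank is such a group: over an ordered field that contains sufficiently many
elements at pairwise distance more than `2`, Möbius transformations mapping the exterior of one of
two paired unit intervals into the other, all these intervals being disjoint, generate a free group
by ping-pong. Some ultrapower of `ℚ` is large enough.
-/

universe u

open scoped MatrixGroups Pointwise

section Noetherian

theorem exists_finite_subset_forall_le_iff {ι L : Type*} [CompleteLattice L] [WellFoundedGT L]
    (I : ι → L) (S : Set ι) :
    ∃ S₀ ⊆ S, S₀.Finite ∧ ∀ K, (∀ w ∈ S₀, I w ≤ K) ↔ ∀ w ∈ S, I w ≤ K := by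
  classical
  obtain ⟨t, htS, ht⟩ := CompleteLattice.WellFoundedGT.isSupFiniteCompact L (I '' S)
  obtain ⟨S₀, hS₀, rfl⟩ := Finset.subset_set_image_iff.1 htS
  refine ⟨S₀, hS₀, S₀.finite_toSet, fun K => ?_⟩
  calc (∀ w ∈ S₀, I w ≤ K) ↔ (S₀.image I).sup id ≤ K := by simp
    _ ↔ sSup (I '' S) ≤ K := by rw [ht]
    _ ↔ ∀ w ∈ S, I w ≤ K := by simp

variable {m A R : Type*} [Fintype m] [DecidableEq m] [CommRing A] [CommRing R]

/-- The ideal of the locus where a matrix over `A` specializes to the identity, generated by the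
entries of `M - 1`. -/
def identityLocusIdeal (M : Matrix m m A) : Ideal A :=
  Ideal.span (Set.range fun p : m × m => (M - 1) p.1 p.2)

theorem identityLocusIdeal_le_ker_iff (M : Matrix m m A) (φ : A →+* R) :
    identityLocusIdeal M ≤ RingHom.ker φ ↔ φ.mapMatrix M = 1 := by
  rw [identityLocusIdeal, Ideal.span_le, Set.range_subset_iff, ← sub_eq_zero,
    ← map_one φ.mapMatrix, ← map_sub, ← Matrix.ext_iff, Prod.forall]
  rfl

theorem exists_finite_subset_mapMatrix_eq_one_iff {ι : Type*} [IsNoetherianRing A]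
    (M : ι → Matrix m m A) (S : Set ι) :
    ∃ S₀ ⊆ S, S₀.Finite ∧ ∀ φ : A →+* R,
      (∀ w ∈ S₀, φ.mapMatrix (M w) = 1) ↔ ∀ w ∈ S, φ.mapMatrix (M w) = 1 := by
  obtain ⟨S₀, hS₀, hfin, h⟩ :=
    exists_finite_subset_forall_le_iff (fun w => identityLocusIdeal (M w)) S
  refine ⟨S₀, hS₀, hfin, fun φ => ?_⟩
  simpa only [identityLocusIdeal_le_ker_iff] using h (RingHom.ker φ)

end Noetherian

section LinearGroup

open MvPolynomial

variable {σ κ m R G : Type*} [Fintype m] [DecidableEq m] [CommRing R] [Group G]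
  (ρ : G →* Matrix m m R) (k : κ → G)

/-- The polynomials over `R` in the entries of two generic matrices for each variable `s : σ`: the
pair `(s, true)` indexes the matrix standing for `s` and `(s, false)` the one standing for `s⁻¹`. -/
abbrev GenericEntryRing (σ m R : Type*) [CommRing R] : Type _ :=
  MvPolynomial ((σ × Bool) × m × m) R

/-- The matrix of a letter `x` or `x⁻¹` (written `(x, true)` and `(x, false)`, as in `FreeGroup`):
generic if `x` is a variable in `σ`, and given by `ρ` if `x` is a constant in `κ`. -/
noncomputable def letterMatrix : (σ ⊕ κ) × Bool → Matrix m m (GenericEntryRing σ m R)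
  | (.inl s, b) => .of fun i j => X ((s, b), i, j)
  | (.inr c, b) => C.mapMatrix (ρ (cond b (k c) (k c)⁻¹))

/-- The generic value of `w`, a product of letter matrices. It is read off from the reduced word,
because the generic matrices standing for `s` and `s⁻¹` are not inverse to each other. -/
noncomputable def wordMatrix (w : FreeGroup (σ ⊕ κ)) : Matrix m m (GenericEntryRing σ m R) :=
  open scoped Classical in (w.toWord.map (letterMatrix ρ k)).prod

/-- The evaluation of generic entries at the matrices of the tuple `a` and their inverses. -/
noncomputable def specialization (a : σ → G) : GenericEntryRing σ m R →+* R :=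
  eval fun t => ρ (cond t.1.2 (a t.1.1) (a t.1.1)⁻¹) t.2.1 t.2.2

theorem mapMatrix_specialization_letterMatrix (a : σ → G) (x : (σ ⊕ κ) × Bool) :
    (specialization ρ a).mapMatrix (letterMatrix ρ k x) =
      ρ (cond x.2 (Sum.elim a k x.1) (Sum.elim a k x.1)⁻¹) := by
  ext i j
  rcases x with ⟨s | c, b⟩ <;> simp [letterMatrix, specialization]

theorem mapMatrix_specialization_wordMatrix (a : σ → G) (w : FreeGroup (σ ⊕ κ)) :
    (specialization ρ a).mapMatrix (wordMatrix ρ k w) =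
      ρ (FreeGroup.lift (Sum.elim a k) w) := by
  classical
  conv_rhs => rw [← FreeGroup.mk_toWord (x := w), FreeGroup.lift_mk]
  simp only [wordMatrix, map_list_prod, List.map_map, Function.comp_def,
    mapMatrix_specialization_letterMatrix]

variable {ρ}

theorem exists_finite_subsystem_of_injective_toMatrix [Finite σ] [IsNoetherianRing R]
    (hρ : Function.Injective ρ) (S : Set (FreeGroup (σ ⊕ κ))) :
    ∃ S₀ ⊆ S, S₀.Finite ∧ ∀ a : σ → G,
      (∀ w ∈ S₀, FreeGroup.lift (Sum.elim a k) w = 1) ↔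
        ∀ w ∈ S, FreeGroup.lift (Sum.elim a k) w = 1 := by
  obtain ⟨S₀, hS₀, hfin, h⟩ :=
    exists_finite_subset_mapMatrix_eq_one_iff (R := R) (wordMatrix ρ k) S
  refine ⟨S₀, hS₀, hfin, fun a => ?_⟩
  simpa only [mapMatrix_specialization_wordMatrix, map_eq_one_iff ρ hρ]
    using h (specialization ρ a)

end LinearGroup

section PingPong

section CommRing

variable {R : Type*} [CommRing R]

/-- The matrix of the Möbius transformation `z ↦ d - 1 / (z - e)`, which maps the exterior of the
unit interval around `e` on the projective line onto the interior of the one around `d`. -/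
def schottkyMatrix (d e : R) : SL(2, R) :=
  ⟨!![d, -(d * e) - 1; 1, -e], by rw [Matrix.det_fin_two_of]; ring⟩

theorem coe_schottkyMatrix (d e : R) :
    (schottkyMatrix d e : Matrix (Fin 2) (Fin 2) R) = !![d, -(d * e) - 1; 1, -e] :=
  rfl

theorem schottkyMatrix_smul (d e : R) (v : Fin 2 → R) :
    schottkyMatrix d e • v = ![d * (v 0 - e * v 1) - v 1, v 0 - e * v 1] := by
  rw [Matrix.SpecialLinearGroup.smul_def, coe_schottkyMatrix, Matrix.smul_eq_mulVec,
    Matrix.mulVec_fin_two]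
  ext i
  fin_cases i <;> simp <;> ring

theorem schottkyMatrix_inv_smul (d e : R) (v : Fin 2 → R) :
    (schottkyMatrix d e)⁻¹ • v = ![e * (d * v 1 - v 0) + v 1, d * v 1 - v 0] := by
  rw [inv_smul_eq_iff, schottkyMatrix_smul]
  ext i
  fin_cases i <;> simp

/-- The nonzero vectors of `R²` with the action of `SL₂(R)`: homogeneous coordinates for the
projective line. -/
def nonzeroVectors (R : Type*) [CommRing R] : SubMulAction SL(2, R) (Fin 2 → R) where
  carrier := {v | v ≠ 0}
  smul_mem' g _ hv := (smul_ne_zero_iff_ne g).2 hv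

end CommRing

variable {ι R : Type u} [CommRing R] [LinearOrder R]

/-- The closed unit interval around `c` on the projective line, in the coordinate `v 0 / v 1`. -/
def projectiveInterval (c : R) : Set (nonzeroVectors R) :=
  {v | |v.1 0 - c * v.1 1| ≤ |v.1 1|}

theorem schottkyMatrix_smul_compl_subset (d e : R) :
    schottkyMatrix d e • (projectiveInterval e)ᶜ ⊆ projectiveInterval d := by
  rintro _ ⟨⟨v, _⟩, hve, rfl⟩
  have exterior : |v 1| < |v 0 - e * v 1| := not_le.1 hve
  simpa [projectiveInterval, schottkyMatrix_smul] using exterior.le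

theorem schottkyMatrix_inv_smul_compl_subset (d e : R) :
    (schottkyMatrix d e)⁻¹ • (projectiveInterval d)ᶜ ⊆ projectiveInterval e := by
  rintro _ ⟨⟨v, _⟩, hvd, rfl⟩
  have exterior : |v 1| < |v 0 - d * v 1| := not_le.1 hvd
  simpa [projectiveInterval, schottkyMatrix_inv_smul, abs_sub_comm (d * v 1)] using exterior.le

variable [IsStrictOrderedRing R]

theorem projectiveInterval_nonempty (c : R) : (projectiveInterval c).Nonempty :=
  ⟨⟨![c, 1], fun h => one_ne_zero (congrFun h 1)⟩, by simp [projectiveInterval]⟩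

theorem disjoint_projectiveInterval {c c' : R} (h : 2 < |c - c'|) :
    Disjoint (projectiveInterval c) (projectiveInterval c') := by
  rw [Set.disjoint_left]
  rintro ⟨v, hv⟩ (hc : |v 0 - c * v 1| ≤ |v 1|) (hc' : |v 0 - c' * v 1| ≤ |v 1|)
  refine hv ?_
  have gap_mul_le : |c - c'| * |v 1| ≤ 2 * |v 1| :=
    calc |c - c'| * |v 1| = |(v 0 - c' * v 1) - (v 0 - c * v 1)| := by rw [← abs_mul]; ring_nf
      _ ≤ |v 0 - c' * v 1| + |v 0 - c * v 1| := abs_sub _ _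
      _ ≤ 2 * |v 1| := by linarith
  have v_one : v 1 = 0 := abs_eq_zero.1 (by nlinarith [abs_nonneg (v 1)])
  have v_zero : v 0 = 0 := by simpa [v_one] using hc
  ext i
  fin_cases i
  exacts [v_zero, v_one]

theorem injective_lift_schottkyMatrix [Nontrivial ι] {d e : ι → R}
    (hd : Pairwise fun i j => 2 < |d i - d j|) (he : Pairwise fun i j => 2 < |e i - e j|)
    (hde : ∀ i j, 2 < |d i - e j|) :
    Function.Injective (FreeGroup.lift fun i => schottkyMatrix (d i) (e i)) :=
  FreeGroup.injective_lift_of_ping_pong (fun i => schottkyMatrix (d i) (e i))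
    (fun i => projectiveInterval (d i)) (fun i => projectiveInterval (e i))
    (fun i => projectiveInterval_nonempty (d i))
    (fun _ _ hij => disjoint_projectiveInterval (hd hij))
    (fun _ _ hij => disjoint_projectiveInterval (he hij))
    (fun i j => disjoint_projectiveInterval (hde i j))
    (fun i => schottkyMatrix_smul_compl_subset (d i) (e i))
    (fun i => schottkyMatrix_inv_smul_compl_subset (d i) (e i))

end PingPong

section FreeGroup

-- Every finite subset of `ι` can be separated by integers; the ultrapower over an ultrafilter of
-- eventually large finite subsets glues these separating functions together.
theorem exists_orderedField_pairwise_two_lt_abs_sub (ι : Type u) :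
    ∃ (K : Type u) (_ : Field K) (_ : LinearOrder K) (_ : IsStrictOrderedRing K) (c : ι → K),
      Pairwise fun i j => 2 < |c i - c j| := by
  choose f hf using fun s : Finset ι => Set.countable_iff_exists_injOn.1 s.countable_toSet
  let φ : Ultrafilter (Finset ι) := .of Filter.atTop
  let c (i : ι) : Filter.Germ (φ : Filter (Finset ι)) ℚ := ↑fun s => (3 * f s i : ℚ)
  refine ⟨_, inferInstance, inferInstance, inferInstance, c, fun i j hij => ?_⟩
  have eventually_mem (k : ι) : ∀ᶠ s in (φ : Filter (Finset ι)), k ∈ s :=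
    Ultrafilter.of_le _ <|
      (Filter.eventually_ge_atTop {k}).mono fun _ => Finset.singleton_subset_iff.1
  suffices ∀ᶠ s in (φ : Filter (Finset ι)), 2 < |(3 * f s i : ℚ) - 3 * f s j| by
    beta_reduce
    rw [Filter.Germ.abs_def]
    exact Filter.Germ.coe_lt.2 this
  filter_upwards [eventually_mem i, eventually_mem j] with s hi hj
  have apart : (f s i : ℤ) ≠ f s j := mod_cast (hf s).ne hi hj hij
  have two_lt : 2 < |3 * (f s i : ℤ) - 3 * f s j| := by rw [lt_abs]; omega
  exact_mod_cast two_lt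

theorem exists_injective_freeGroup_toMatrix (α : Type u) :
    ∃ (K : Type u) (_ : Field K) (ρ : FreeGroup α →* Matrix (Fin 2) (Fin 2) K),
      Function.Injective ρ := by
  -- The summand `Bool` only serves to provide the two generators that the ping-pong lemma requires.
  obtain ⟨K, _, _, _, c, hc⟩ :=
    exists_orderedField_pairwise_two_lt_abs_sub ((α ⊕ Bool) ⊕ (α ⊕ Bool))
  have : Nontrivial (α ⊕ Bool) := Sum.inr_injective.nontrivial
  have lift_injective : Function.Injective
      (FreeGroup.lift fun i => schottkyMatrix (c (.inl i)) (c (.inr i))) :=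
    injective_lift_schottkyMatrix (hc.comp_of_injective Sum.inl_injective)
      (hc.comp_of_injective Sum.inr_injective) fun _ _ => hc Sum.inl_ne_inr
  exact ⟨K, _, (Matrix.SpecialLinearGroup.coeMonoidHom.comp (FreeGroup.lift _)).comp
      (FreeGroup.map Sum.inl),
    (Matrix.SpecialLinearGroup.coeMonoidHom_injective.comp lift_injective).comp
      (FreeGroup.map_injective Sum.inl_injective)⟩

theorem free_group_equationally_noetherian_general {σ α : Type*} [Finite σ]
    (S : Set (FreeGroup (σ ⊕ α))) :
    ∃ S₀ ⊆ S, S₀.Finite ∧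
      ∀ a : σ → FreeGroup α,
        ((∀ w ∈ S₀, FreeGroup.lift (Sum.elim a FreeGroup.of) w = 1) ↔
          (∀ w ∈ S, FreeGroup.lift (Sum.elim a FreeGroup.of) w = 1)) := by
  obtain ⟨K, _, ρ, hρ⟩ := exists_injective_freeGroup_toMatrix α
  exact exists_finite_subsystem_of_injective_toMatrix FreeGroup.of hρ S

end FreeGroup

/-- Equational Noetherianity of free groups: every system `S` of equations with
constants in finitely many variables over a free group of finite rank is equivalent
over the free group to a finite subsystem `S₀ ⊆ S`. -/
theorem free_group_equationally_noetherian (r n : ℕ)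
    (S : Set (FreeGroup (Fin n ⊕ Fin r))) :
    ∃ S₀ ⊆ S, S₀.Finite ∧
      ∀ a : Fin n → FreeGroup (Fin r),
        ((∀ w ∈ S₀, evalEquation a w = 1) ↔ (∀ w ∈ S, evalEquation a w = 1)) :=
  free_group_equationally_noetherian_general S
end

section
/- Let F be a free group of finite rank at least 2 with basis A. Every finite system of equations with constants in variables x₁,…,xₙ over F is equivalent over F to a single equation with constants: for any w₁,…,wₛ in the free group on {x₁,…,xₙ} ∪ A there exists a single element w of the free group on {x₁,…,xₙ} ∪ A such that for every tuple (a₁,…,aₙ) of elements of F, one has w(a₁,…,aₙ) = 1 in F if and only if wᵢ(a₁,…,aₙ) = 1 in F for all i = 1,…,s. -/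
/-!
In a free group `x ^ 2 * y ^ 2 = z ^ 2` forces `x`, `y`, `z` to generate a cyclic subgroup
(Lyndon). By Nielsen–Schreier we may assume that they generate the whole free group. The
abelianization being torsion-free, `z = x * y * c` with `c` a product of commutators. In the
dihedral group of order 8 such a `c` is central with `c ^ 2 = 1`, so
`x ^ 2 * y ^ 2 = (x * y) ^ 2` there and the images of `x`, `y`, `z` commute. Two distinct basis
elements, however, can be sent to non-commuting elements.

Roots in a free group being unique, `v ^ 2 * c ^ 2 = (u * v * c) ^ 2` therefore says that `u = 1`
and `v` commutes with `c`. An equation `u = 1` can thus absorb the condition that `v` commutes with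
`c`, and absorbing it for two distinct basis elements `c` amounts to absorbing `v = 1`.
-/

section SquareEquation

theorem commute_of_sq_mul_sq_eq_sq_mul_central {G : Type*} [Group G] {x y c : G}
    (hc : c ∈ Subgroup.center G) (hc_sq : c ^ 2 = 1) (h : x ^ 2 * y ^ 2 = (x * y * c) ^ 2) :
    Commute x y := by
  have hc_comm : Commute (x * y) c := Subgroup.mem_center_iff.mp hc (x * y)
  have h_sq : x * (x * y * y) = x * (y * x * y) :=
    calc x * (x * y * y) = x ^ 2 * y ^ 2 := by simp only [pow_two, mul_assoc]
      _ = (x * y) ^ 2 := by rw [h, hc_comm.mul_pow, hc_sq, mul_one]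
      _ = x * (y * x * y) := by simp only [pow_two, mul_assoc]
  exact mul_right_cancel (mul_left_cancel h_sq)

theorem map_mem_commutator {G H : Type*} [Group G] [Group H] (f : G →* H) {g : G}
    (hg : g ∈ commutator G) : f g ∈ commutator H := by
  rw [← Abelianization.ker_of, MonoidHom.mem_ker] at hg ⊢
  rw [← Abelianization.map_of, hg, map_one]

theorem inv_mul_mem_commutator_of_sq_mul_sq_eq_sq {G : Type*} [Group G]
    [IsMulTorsionFree (Abelianization G)] {x y z : G} (h : x ^ 2 * y ^ 2 = z ^ 2) :
    (x * y)⁻¹ * z ∈ commutator G := by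
  have h_ab : Abelianization.of (x * y) = Abelianization.of z := by
    apply pow_left_injective two_ne_zero
    simpa only [map_mul, map_pow, mul_pow] using congrArg Abelianization.of h
  rw [← Abelianization.ker_of, MonoidHom.mem_ker, map_mul, map_inv, h_ab, inv_mul_cancel]

theorem commute_map_of_sq_mul_sq_eq_sq {G D : Type*} [Group G] [Group D]
    [IsMulTorsionFree (Abelianization G)] (hD_center : commutator D ≤ Subgroup.center D)
    (hD_sq : ∀ c ∈ commutator D, c ^ 2 = 1) (f : G →* D) {x y z : G}
    (h : x ^ 2 * y ^ 2 = z ^ 2) (hgen : Subgroup.closure {x, y, z} = ⊤) (g₁ g₂ : G) :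
    Commute (f g₁) (f g₂) := by
  obtain ⟨c, hc, hz⟩ : ∃ c ∈ commutator D, f z = f x * f y * c :=
    ⟨f ((x * y)⁻¹ * z), map_mem_commutator f (inv_mul_mem_commutator_of_sq_mul_sq_eq_sq h), by
      rw [← map_mul, ← map_mul, mul_inv_cancel_left]⟩
  have hc_comm (d : D) : Commute d c := Subgroup.mem_center_iff.mp (hD_center hc) d
  have hxy : Commute (f x) (f y) :=
    commute_of_sq_mul_sq_eq_sq_mul_central (hD_center hc) (hD_sq c hc) (by
      rw [← hz, ← map_pow, ← map_pow, ← map_pow, ← map_mul, h])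
  have hxz : Commute (f x) (f z) :=
    hz ▸ ((Commute.refl _).mul_right hxy).mul_right (hc_comm _)
  have hyz : Commute (f y) (f z) :=
    hz ▸ (hxy.symm.mul_right (Commute.refl _)).mul_right (hc_comm _)
  have h_closure : IsMulCommutative (Subgroup.closure (f '' {x, y, z})) := by
    apply Subgroup.isMulCommutative_closure
    simp only [Set.image_insert_eq, Set.image_singleton]
    rintro _ (rfl | rfl | rfl) _ (rfl | rfl | rfl)
    exacts [rfl, hxy, hxz, hxy.symm, rfl, hyz, hxz.symm, hyz.symm, rfl]
  have h_mem (g : G) : f g ∈ Subgroup.closure (f '' {x, y, z}) := by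
    rw [← MonoidHom.map_closure, hgen]
    exact ⟨g, Subgroup.mem_top g, rfl⟩
  exact congrArg Subtype.val (h_closure.is_comm.comm ⟨f g₁, h_mem g₁⟩ ⟨f g₂, h_mem g₂⟩)

end SquareEquation

section FreeGroup

open scoped commutatorElement in
theorem commutator_dihedralGroup_four_le_center :
    commutator (DihedralGroup 4) ≤ Subgroup.center (DihedralGroup 4) := by
  have h_comm : ∀ g₁ g₂ g : DihedralGroup 4, g * ⁅g₁, g₂⁆ = ⁅g₁, g₂⁆ * g := by decide
  exact Subgroup.commutator_le.mpr fun g₁ _ g₂ _ => Subgroup.mem_center_iff.mpr (h_comm g₁ g₂)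

theorem sq_eq_one_of_mem_center_dihedralGroup_four {c : DihedralGroup 4}
    (hc : c ∈ Subgroup.center (DihedralGroup 4)) : c ^ 2 = 1 := by
  rw [Subgroup.mem_center_iff] at hc
  decide +revert

instance isMulTorsionFree_abelianization_freeGroup (ι : Type*) :
    IsMulTorsionFree (Abelianization (FreeGroup ι)) :=
  let e : Abelianization (FreeGroup ι) ≃* Multiplicative (ι →₀ ℤ) :=
    AddEquiv.toMultiplicativeRight (FreeAbelianGroup.equivFinsupp ι)
  Function.Injective.isMulTorsionFree e.toMonoidHom e.injective

theorem subsingleton_of_forall_commute_map_dihedralGroup_four {ι : Type*}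
    (h : ∀ (f : FreeGroup ι →* DihedralGroup 4) (g₁ g₂ : FreeGroup ι), Commute (f g₁) (f g₂)) :
    Subsingleton ι := by
  classical
  refine ⟨fun i j => by_contra fun hij => ?_⟩
  have h_comm := h (FreeGroup.lift (Function.update (fun _ => .r 1) i (.sr 0))) (.of i) (.of j)
  rw [FreeGroup.lift_apply_of, FreeGroup.lift_apply_of, Function.update_self,
    Function.update_of_ne (Ne.symm hij)] at h_comm
  exact absurd h_comm.eq (by decide)

theorem isCyclic_freeGroup_of_subsingleton (ι : Type*) [Subsingleton ι] :
    IsCyclic (FreeGroup ι) := by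
  rcases isEmpty_or_nonempty ι with _ | ⟨⟨i⟩⟩
  · infer_instance
  · have := uniqueOfSubsingleton i
    infer_instance

theorem isCyclic_freeGroup_of_sq_mul_sq_eq_sq {ι : Type*} {x y z : FreeGroup ι}
    (h : x ^ 2 * y ^ 2 = z ^ 2) (hgen : Subgroup.closure {x, y, z} = ⊤) :
    IsCyclic (FreeGroup ι) := by
  have : Subsingleton ι := subsingleton_of_forall_commute_map_dihedralGroup_four fun f =>
    commute_map_of_sq_mul_sq_eq_sq commutator_dihedralGroup_four_le_center
      (fun _ hc => sq_eq_one_of_mem_center_dihedralGroup_four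
        (commutator_dihedralGroup_four_le_center hc)) f h hgen
  exact isCyclic_freeGroup_of_subsingleton ι

section IsFreeGroup

variable {G : Type*} [Group G] [IsFreeGroup G] {x y z : G}

theorem isCyclic_closure_of_sq_mul_sq_eq_sq (h : x ^ 2 * y ^ 2 = z ^ 2) :
    IsCyclic (Subgroup.closure {x, y, z}) := by
  set H := Subgroup.closure {x, y, z}
  have hx : x ∈ H := Subgroup.subset_closure (by simp)
  have hy : y ∈ H := Subgroup.subset_closure (by simp)
  have hz : z ∈ H := Subgroup.subset_closure (by simp)
  let e : H ≃* FreeGroup (IsFreeGroup.Generators H) := IsFreeGroup.toFreeGroup H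
  have h_preimage : ((↑) ⁻¹' {x, y, z} : Set H) = {⟨x, hx⟩, ⟨y, hy⟩, ⟨z, hz⟩} := by
    ext g
    simp [Subtype.ext_iff]
  have hgen : Subgroup.closure {e ⟨x, hx⟩, e ⟨y, hy⟩, e ⟨z, hz⟩} = ⊤ := by
    have h_top : Subgroup.closure {⟨x, hx⟩, ⟨y, hy⟩, ⟨z, hz⟩} = (⊤ : Subgroup H) :=
      h_preimage ▸ Subgroup.closure_closure_coe_preimage
    have h_map := congrArg (Subgroup.map e.toMonoidHom) h_top
    rw [MonoidHom.map_closure, Subgroup.map_top_of_surjective _ e.surjective] at h_map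
    simpa [Set.image_insert_eq] using h_map
  have he : e ⟨x, hx⟩ ^ 2 * e ⟨y, hy⟩ ^ 2 = e ⟨z, hz⟩ ^ 2 := by
    rw [← map_pow, ← map_pow, ← map_pow, ← map_mul]
    exact congrArg e (Subtype.ext h)
  exact e.isCyclic.mpr (isCyclic_freeGroup_of_sq_mul_sq_eq_sq he hgen)

theorem exists_mem_zpowers_of_sq_mul_sq_eq_sq (h : x ^ 2 * y ^ 2 = z ^ 2) :
    ∃ t : G, x ∈ Subgroup.zpowers t ∧ y ∈ Subgroup.zpowers t := by
  obtain ⟨t, ht⟩ := (Subgroup.isCyclic_iff_exists_zpowers_eq_top _).mp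
    (isCyclic_closure_of_sq_mul_sq_eq_sq h)
  exact ⟨t, ht ▸ Subgroup.subset_closure (by simp), ht ▸ Subgroup.subset_closure (by simp)⟩

theorem commute_of_sq_mul_sq_eq_sq (h : x ^ 2 * y ^ 2 = z ^ 2) : Commute x y := by
  obtain ⟨t, ⟨m, rfl⟩, ⟨n, rfl⟩⟩ := exists_mem_zpowers_of_sq_mul_sq_eq_sq h
  exact Commute.zpow_zpow_self t m n

theorem exists_mem_zpowers_of_commute (h : Commute x y) :
    ∃ t : G, x ∈ Subgroup.zpowers t ∧ y ∈ Subgroup.zpowers t :=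
  exists_mem_zpowers_of_sq_mul_sq_eq_sq (h.mul_pow 2).symm

end IsFreeGroup

variable {α : Type*}

/-- The exponent sum of the generator `i`, as a homomorphism to `ℤ` written multiplicatively. -/
def exponentSum [DecidableEq α] (i : α) : FreeGroup α →* Multiplicative ℤ :=
  FreeGroup.lift (Pi.mulSingle i (Multiplicative.ofAdd 1))

theorem exponentSum_of_self [DecidableEq α] (i : α) :
    exponentSum i (.of i) = Multiplicative.ofAdd 1 := by
  rw [exponentSum, FreeGroup.lift_apply_of, Pi.mulSingle_eq_same]

theorem exponentSum_of_of_ne [DecidableEq α] {i j : α} (hij : i ≠ j) :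
    exponentSum i (.of j) = 1 := by
  rw [exponentSum, FreeGroup.lift_apply_of, Pi.mulSingle_eq_of_ne hij.symm]

theorem mem_zpowers_of_commute_of {i : α} {v : FreeGroup α} (h : Commute v (.of i)) :
    v ∈ Subgroup.zpowers (.of i) := by
  classical
  obtain ⟨t, hv, ⟨k, hk : t ^ k = .of i⟩⟩ := exists_mem_zpowers_of_commute h
  have hk_mul : k * (exponentSum i t).toAdd = 1 := by
    simpa only [map_zpow, exponentSum_of_self, toAdd_zpow, toAdd_ofAdd, smul_eq_mul] using
      congrArg (fun g => (exponentSum i g).toAdd) hk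
  have ht : t = .of i ^ k := by
    rw [← hk, ← zpow_mul, Int.isUnit_mul_self (.of_mul_eq_one _ hk_mul), zpow_one]
  have ht_mem : t ∈ Subgroup.zpowers (FreeGroup.of i) := ⟨k, ht.symm⟩
  exact Subgroup.zpowers_le.mpr ht_mem hv

theorem eq_one_of_commute_of_of {i j : α} (hij : i ≠ j) {v : FreeGroup α}
    (hi : Commute v (.of i)) (hj : Commute v (.of j)) : v = 1 := by
  classical
  obtain ⟨m, rfl⟩ := mem_zpowers_of_commute_of hi
  obtain ⟨n, hn : FreeGroup.of j ^ n = FreeGroup.of i ^ m⟩ := mem_zpowers_of_commute_of hj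
  have hm : 0 = m := by
    simpa only [map_zpow, exponentSum_of_self, exponentSum_of_of_ne hij, one_zpow, toAdd_one,
      toAdd_zpow, toAdd_ofAdd, smul_eq_mul, mul_one] using
      congrArg (fun g => (exponentSum i g).toAdd) hn
  simp only [← hm, zpow_zero]

end FreeGroup

section SingleEquation

variable {G H : Type*} [Group G] [Group H] {α : Type*}

/-- The word which adjoins the condition that `v` commutes with `c` to the equation `u = 1`: over a
free group it is trivial exactly when both hold. -/
def absorbCommute (c u v : G) : G :=
  v ^ 2 * c ^ 2 * ((u * v * c) ^ 2)⁻¹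

theorem map_absorbCommute (f : G →* H) (c u v : G) :
    f (absorbCommute c u v) = absorbCommute (f c) (f u) (f v) := by
  simp only [absorbCommute, map_mul, map_inv, map_pow]

theorem absorbCommute_eq_one_iff (c u v : FreeGroup α) :
    absorbCommute c u v = 1 ↔ u = 1 ∧ Commute v c := by
  rw [absorbCommute, mul_inv_eq_one]
  refine ⟨fun h => ?_, fun ⟨hu, hvc⟩ => by rw [hu, one_mul, hvc.mul_pow]⟩
  have hvc : Commute v c := commute_of_sq_mul_sq_eq_sq h
  have h_root : v * c = u * v * c :=
    pow_left_injective two_ne_zero ((hvc.mul_pow 2).trans h)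
  exact ⟨right_eq_mul.mp (h_root.trans (mul_assoc u v c)), hvc⟩

theorem absorbCommute_absorbCommute_eq_one_iff {i j : α} (hij : i ≠ j) (u v : FreeGroup α) :
    absorbCommute (.of j) (absorbCommute (.of i) u v) v = 1 ↔ u = 1 ∧ v = 1 := by
  rw [absorbCommute_eq_one_iff, absorbCommute_eq_one_iff, and_assoc]
  refine and_congr_right fun _ => ⟨fun ⟨hi, hj⟩ => eq_one_of_commute_of_of hij hi hj, ?_⟩
  rintro rfl
  exact ⟨Commute.one_left _, Commute.one_left _⟩

theorem exists_lift_eq_one_iff_and {σ : Type*} [Nontrivial α] (u v : FreeGroup (σ ⊕ α)) :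
    ∃ w₀ : FreeGroup (σ ⊕ α), ∀ a : σ → FreeGroup α,
      FreeGroup.lift (Sum.elim a .of) w₀ = 1 ↔
        FreeGroup.lift (Sum.elim a .of) u = 1 ∧ FreeGroup.lift (Sum.elim a .of) v = 1 := by
  obtain ⟨i, j, hij⟩ := exists_pair_ne α
  refine ⟨absorbCommute (.of (.inr j)) (absorbCommute (.of (.inr i)) u v) v, fun a => ?_⟩
  simp only [map_absorbCommute, FreeGroup.lift_apply_of, Sum.elim_inr,
    absorbCommute_absorbCommute_eq_one_iff hij]

theorem finite_system_equivalent_to_single_equation_general {σ ι : Type*} [Nontrivial α]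
    [Finite ι] (w : ι → FreeGroup (σ ⊕ α)) :
    ∃ w₀ : FreeGroup (σ ⊕ α), ∀ a : σ → FreeGroup α,
      FreeGroup.lift (Sum.elim a .of) w₀ = 1 ↔ ∀ i, FreeGroup.lift (Sum.elim a .of) (w i) = 1 := by
  classical
  have := Fintype.ofFinite ι
  suffices h : ∀ s : Finset ι, ∃ w₀ : FreeGroup (σ ⊕ α), ∀ a : σ → FreeGroup α,
      FreeGroup.lift (Sum.elim a .of) w₀ = 1 ↔
        ∀ i ∈ s, FreeGroup.lift (Sum.elim a .of) (w i) = 1 by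
    simpa using h Finset.univ
  intro s
  induction s using Finset.induction_on with
  | empty => exact ⟨1, by simp⟩
  | insert i s _ ih =>
    obtain ⟨u, hu⟩ := ih
    obtain ⟨w₀, hw₀⟩ := exists_lift_eq_one_iff_and (w i) u
    exact ⟨w₀, fun a => by rw [hw₀, hu, Finset.forall_mem_insert]⟩

end SingleEquation

/-- Over a free group of finite rank at least 2, every finite system of equations with
constants in variables `x₁, …, xₙ` is equivalent to a single equation with constants. -/
theorem finite_system_equivalent_to_single_equation (r n s : ℕ) (hr : 2 ≤ r)
    (w : Fin s → FreeGroup (Fin n ⊕ Fin r)) :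
    ∃ w₀ : FreeGroup (Fin n ⊕ Fin r),
      ∀ a : Fin n → FreeGroup (Fin r),
        (evalEquation a w₀ = 1 ↔ ∀ i, evalEquation a (w i) = 1) := by
  have : Nontrivial (Fin r) := Fin.nontrivial_iff_two_le.mpr hr
  exact finite_system_equivalent_to_single_equation_general w
end

section
/- Let F be a free group of finite rank at least 2 and let G be a finitely generated group. For any family Ψ of group homomorphisms from G to F there exist finitely many normal subgroups N₁,…,N_k of G such that each quotient G/Nᵢ is a finitely generated fully residually free group and every homomorphism ψ ∈ Ψ factors through one of the quotients G/Nᵢ, i.e., for every ψ ∈ Ψ there is an index i with Nᵢ contained in the kernel of ψ. -/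
/-- A group `H` is fully residually free if for every finite set of nontrivial elements
of `H` there is a homomorphism from `H` to a free group mapping each of them to a
nontrivial element. -/
def FullyResiduallyFree (H : Type*) [Group H] : Prop :=
  ∀ s : Finset H, (∀ h ∈ s, h ≠ 1) →
    ∃ (ι : Type) (f : H →* FreeGroup ι), ∀ h ∈ s, f h ≠ 1

/-!
The matrices `!![1 + 8 * c, -(8 * c ^ 2); 8, 1 - 8 * c]` for `c : ℤ` play ping-pong, so they freely
generate a subgroup of `SL(2, ℤ)`. A homomorphism from the finitely generated group `G` to a free
group involves only finitely many letters, hence has the same kernel as a homomorphism to the free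
group on `ℤ`, and therefore as a representation of `G` over the domain `ℤ`.

For any family of representations of `G` over a domain, the matrix entries, viewed as functions on
the index set, generate a finitely generated and hence Noetherian ring. The index set thereby
carries a Noetherian topology in which `φ i g = 1` is a closed condition on `i`. The subgroups
`Nᵢ` are the intersections of the kernels over the finitely many irreducible components: finitely
many nonempty open conditions `φ i g ≠ 1` on an irreducible set can be met at the same time, which
makes the quotients fully residually free.
-/

open Topology TopologicalSpace

/-! ### A free subgroup of `SL(2, ℤ)` of infinite rank -/

section PingPong

open Matrix.SpecialLinearGroup

/-- The parabolic matrix with fixed vector `(c, 1)`, conjugate to `!![1, 0; 8, 1]` under the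
translation by `c`. -/
def parabolic (c : ℤ) : Matrix.SpecialLinearGroup (Fin 2) ℤ :=
  ⟨!![1 + 8 * c, -(8 * c ^ 2); 8, 1 - 8 * c], by rw [Matrix.det_fin_two_of]; ring⟩

/-- The value on the first column of `g` of the linear form `(x, y) ↦ x - c * y`, which vanishes on
the fixed vector of `parabolic c`. -/
def columnOffset (c : ℤ) (g : Matrix.SpecialLinearGroup (Fin 2) ℤ) : ℤ :=
  g 0 0 - c * g 1 0

/-- The attracting ping-pong set of `parabolic c`: matrices with `g 1 0 / columnOffset c g ≥ 4`,
where a vanishing `columnOffset` counts as ratio `∞`. The group acts on itself by left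
multiplication; only first columns matter, and these are automatically nonzero vectors. -/
def attractingSet (c : ℤ) : Set (Matrix.SpecialLinearGroup (Fin 2) ℤ) :=
  {g | 4 * columnOffset c g ^ 2 ≤ g 1 0 * columnOffset c g}

/-- The repelling ping-pong set of `parabolic c`: matrices with `g 1 0 / columnOffset c g < -4`. -/
def repellingSet (c : ℤ) : Set (Matrix.SpecialLinearGroup (Fin 2) ℤ) :=
  {g | g 1 0 * columnOffset c g < -(4 * columnOffset c g ^ 2)}

variable (c : ℤ) (g : Matrix.SpecialLinearGroup (Fin 2) ℤ)

theorem parabolic_mul_apply_zero_zero :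
    (parabolic c * g) 0 0 = g 0 0 + 8 * c * columnOffset c g := by
  rw [coe_mul, Matrix.mul_apply, Fin.sum_univ_two, columnOffset]
  simp only [parabolic, Matrix.of_apply, Matrix.cons_val_zero, Matrix.cons_val_one]
  ring

theorem parabolic_mul_apply_one_zero :
    (parabolic c * g) 1 0 = g 1 0 + 8 * columnOffset c g := by
  rw [coe_mul, Matrix.mul_apply, Fin.sum_univ_two, columnOffset]
  simp only [parabolic, Matrix.of_apply, Matrix.cons_val_zero, Matrix.cons_val_one]
  ring

theorem columnOffset_parabolic_mul : columnOffset c (parabolic c * g) = columnOffset c g := by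
  rw [columnOffset, parabolic_mul_apply_zero_zero, parabolic_mul_apply_one_zero, columnOffset]
  ring

variable {c g}

theorem parabolic_mul_mem_attractingSet (hg : g ∉ repellingSet c) :
    parabolic c * g ∈ attractingSet c := by
  have hslope : -(4 * columnOffset c g ^ 2) ≤ g 1 0 * columnOffset c g := not_lt.mp hg
  change 4 * columnOffset c (parabolic c * g) ^ 2 ≤
    (parabolic c * g) 1 0 * columnOffset c (parabolic c * g)
  rw [columnOffset_parabolic_mul, parabolic_mul_apply_one_zero]
  linear_combination hslope

theorem parabolic_inv_mul_mem_repellingSet (hg : g ∉ attractingSet c) :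
    (parabolic c)⁻¹ * g ∈ repellingSet c := by
  by_contra hinv
  exact hg (mul_inv_cancel_left (parabolic c) g ▸ parabolic_mul_mem_attractingSet hinv)

theorem disjoint_attractingSet_repellingSet_self :
    Disjoint (attractingSet c) (repellingSet c) :=
  Set.disjoint_left.mpr fun g hattr hrep => by
    have hlt : 4 * columnOffset c g ^ 2 < -(4 * columnOffset c g ^ 2) := lt_of_le_of_lt hattr hrep
    linarith [sq_nonneg (columnOffset c g)]

theorem mul_abs_le_abs_of_mul_sq_le_abs_mul {R : Type*} [CommRing R] [LinearOrder R]
    [IsStrictOrderedRing R] {a x y : R} (h : a * x ^ 2 ≤ |y * x|) : a * |x| ≤ |y| := by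
  rcases eq_or_ne x 0 with rfl | hx
  · simp
  · rw [abs_mul, ← sq_abs, pow_two, ← mul_assoc] at h
    exact le_of_mul_le_mul_right h (abs_pos.mpr hx)

theorem four_mul_abs_columnOffset_le (hg : g ∈ attractingSet c ∪ repellingSet c) :
    4 * |columnOffset c g| ≤ |g 1 0| := by
  refine mul_abs_le_abs_of_mul_sq_le_abs_mul ?_
  rcases hg with hattr | hrep
  · exact le_abs.mpr (Or.inl hattr)
  · exact le_abs.mpr (Or.inr (le_neg_of_le_neg (le_of_lt hrep)))

theorem apply_zero_zero_ne_zero_of_apply_one_zero_eq_zero {R : Type*} [CommRing R] [Nontrivial R]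
    {g : Matrix.SpecialLinearGroup (Fin 2) R} (hg : g 1 0 = 0) : g 0 0 ≠ 0 := by
  intro h
  have hdet := g.det_coe
  rw [Matrix.det_fin_two, h, hg] at hdet
  simp at hdet

/-- The vectors with `4 * |x - c * y| ≤ |y|` are those with `x / y` within `1 / 4` of `c`, so
these cones are disjoint for distinct integers `c`. -/
theorem disjoint_attractingSet_union_repellingSet {d : ℤ} (hcd : c ≠ d) :
    Disjoint (attractingSet c ∪ repellingSet c) (attractingSet d ∪ repellingSet d) := by
  refine Set.disjoint_left.mpr fun g hgc hgd => ?_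
  have hc := four_mul_abs_columnOffset_le hgc
  have hd := four_mul_abs_columnOffset_le hgd
  have hle : |g 1 0| ≤ |columnOffset c g| + |columnOffset d g| :=
    calc |g 1 0| ≤ |d - c| * |g 1 0| :=
          le_mul_of_one_le_left (abs_nonneg _) (Int.one_le_abs (sub_ne_zero.mpr hcd.symm))
      _ = |columnOffset c g - columnOffset d g| := by
          rw [← abs_mul, columnOffset, columnOffset]
          ring_nf
      _ ≤ |columnOffset c g| + |columnOffset d g| := abs_sub _ _
  have hy : g 1 0 = 0 := abs_nonpos_iff.mp (by linarith)
  have hx : g 0 0 = 0 := by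
    rw [hy, abs_zero, columnOffset, hy, mul_zero, sub_zero] at hc
    exact abs_nonpos_iff.mp (by linarith)
  exact apply_zero_zero_ne_zero_of_apply_one_zero_eq_zero hy hx

theorem attractingSet_nonempty : (attractingSet c).Nonempty :=
  ⟨⟨!![c, -1; 1, 0], by simp⟩, by
    change 4 * (c - c * 1) ^ 2 ≤ 1 * (c - c * 1)
    simp⟩

theorem lift_parabolic_injective : Function.Injective (FreeGroup.lift parabolic) := by
  refine FreeGroup.injective_lift_of_ping_pong parabolic attractingSet repellingSet
    (fun _ => attractingSet_nonempty)
    (fun _ _ hcd => (disjoint_attractingSet_union_repellingSet hcd).mono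
      Set.subset_union_left Set.subset_union_left)
    (fun _ _ hcd => (disjoint_attractingSet_union_repellingSet hcd).mono
      Set.subset_union_right Set.subset_union_right)
    (fun c d => ?_) ?_ ?_
  · rcases eq_or_ne c d with rfl | hcd
    · exact disjoint_attractingSet_repellingSet_self
    · exact (disjoint_attractingSet_union_repellingSet hcd).mono
        Set.subset_union_left Set.subset_union_right
  · rintro c _ ⟨g, hg, rfl⟩
    exact parabolic_mul_mem_attractingSet hg
  · rintro c _ ⟨g, hg, rfl⟩
    exact parabolic_inv_mul_mem_repellingSet hg

end PingPong

/-! ### Homomorphisms from finitely generated groups to free groups -/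

theorem exists_finset_forall_hom_apply_eq {ι : Type*} (H : Type*) [Group H]
    (x : FreeGroup ι) :
    ∃ T : Finset ι, ∀ f g : FreeGroup ι →* H,
      (∀ i ∈ T, f (FreeGroup.of i) = g (FreeGroup.of i)) → f x = g x := by
  classical
  induction x using FreeGroup.induction_on with
  | C1 => exact ⟨∅, fun f g _ => by rw [map_one, map_one]⟩
  | of i => exact ⟨{i}, fun f g h => h i (Finset.mem_singleton_self i)⟩
  | inv_of i ih =>
    obtain ⟨T, hT⟩ := ih
    exact ⟨T, fun f g h => by rw [map_inv, map_inv, hT f g h]⟩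
  | mul x y ihx ihy =>
    obtain ⟨T, hT⟩ := ihx
    obtain ⟨U, hU⟩ := ihy
    refine ⟨T ∪ U, fun f g h => ?_⟩
    rw [map_mul, map_mul, hT f g fun i hi => h i (Finset.mem_union_left U hi),
      hU f g fun i hi => h i (Finset.mem_union_right T hi)]

theorem exists_hom_map_of_eq_of_injOn {ι κ : Type*} {T : Set ι} {e : ι → κ}
    (he : T.InjOn e) :
    ∃ f : FreeGroup κ →* FreeGroup ι,
      ∀ i ∈ T, f (FreeGroup.map e (FreeGroup.of i)) = FreeGroup.of i := by
  refine ⟨FreeGroup.lift (Function.extend (T.domRestrict e) (fun i => FreeGroup.of i.1) 1),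
    fun i hi => ?_⟩
  rw [FreeGroup.map.of, FreeGroup.lift_apply_of]
  exact he.injective.extend_apply _ _ ⟨i, hi⟩

theorem exists_hom_freeGroup_ker_eq {G ι : Type*} [Group G] [Group.FG G] (κ : Type*) [Infinite κ]
    (ψ : G →* FreeGroup ι) : ∃ φ : G →* FreeGroup κ, φ.ker = ψ.ker := by
  classical
  obtain ⟨S, hS⟩ := Group.fg_def.mp ‹Group.FG G›
  choose letters hletters using exists_finset_forall_hom_apply_eq (ι := ι) (FreeGroup ι)
  let T := S.biUnion fun g => letters (ψ g)
  obtain ⟨e, -, he⟩ := T.finite_toSet.exists_injOn_of_encard_le (t := (Set.univ : Set κ)) (by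
    rw [Set.infinite_univ.encard_eq]; exact le_top)
  obtain ⟨f, hf⟩ := exists_hom_map_of_eq_of_injOn he
  have hcomp : f.comp ((FreeGroup.map e).comp ψ) = ψ := by
    refine MonoidHom.eq_of_eqOn_dense hS fun g hg => ?_
    exact hletters (ψ g) (f.comp (FreeGroup.map e)) (MonoidHom.id _) fun i hi =>
      hf i (Finset.mem_biUnion.mpr ⟨g, hg, hi⟩)
  refine ⟨(FreeGroup.map e).comp ψ, le_antisymm (fun g hg => ?_) fun g hg => ?_⟩
  · rw [MonoidHom.mem_ker] at hg
    rw [← hcomp, MonoidHom.mem_ker, MonoidHom.comp_apply, hg, map_one]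
  · rw [MonoidHom.mem_ker] at hg
    rw [MonoidHom.mem_ker, MonoidHom.comp_apply, hg, map_one]

/-! ### Noetherian topologies on families of representations -/

theorem exists_noetherianSpace_isClosed_zeros {I R : Type*} [CommRing R] [IsDomain R]
    (A : Subring (I → R)) [IsNoetherianRing A] :
    ∃ _ : TopologicalSpace I, NoetherianSpace I ∧ ∀ f ∈ A, IsClosed {i | f i = 0} := by
  let eval (i : I) : A →+* R := (Pi.evalRingHom (fun _ => R) i).comp A.subtype
  let toSpec (i : I) : PrimeSpectrum A := ⟨RingHom.ker (eval i), RingHom.ker_isPrime _⟩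
  let _ : TopologicalSpace I := .induced toSpec inferInstance
  have hinducing : IsInducing toSpec := ⟨rfl⟩
  refine ⟨inferInstance, hinducing.noetherianSpace, fun f hf => ?_⟩
  have hpreimage : {i | f i = 0} = toSpec ⁻¹' PrimeSpectrum.zeroLocus {⟨f, hf⟩} := by
    ext i
    rw [Set.mem_preimage, PrimeSpectrum.mem_zeroLocus, Set.singleton_subset_iff]
    exact (RingHom.mem_ker (f := eval i) (r := ⟨f, hf⟩)).symm
  rw [hpreimage]
  exact (PrimeSpectrum.isClosed_zeroLocus _).preimage hinducing.continuous

theorem exists_fg_subalgebra_forall_apply_mem (k : Type*) {M n B : Type*} [Monoid M]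
    [Monoid.FG M] [Fintype n] [DecidableEq n] [CommSemiring k] [Semiring B] [Algebra k B]
    (Φ : M →* Matrix n n B) :
    ∃ A : Subalgebra k B, A.FG ∧ ∀ g a b, Φ g a b ∈ A := by
  obtain ⟨S, hS⟩ := Monoid.fg_def.mp ‹Monoid.FG M›
  let entries : Set B := ⋃ g ∈ S, Set.range fun ab : n × n => Φ g ab.1 ab.2
  have hfinite : entries.Finite :=
    S.finite_toSet.biUnion fun _ _ => Set.finite_range _
  let A := Algebra.adjoin k entries
  have hgenerators : (S : Set M) ⊆ A.toSubsemiring.matrix.toSubmonoid.comap Φ :=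
    fun g hg a b => Algebra.subset_adjoin (Set.mem_biUnion hg ⟨(a, b), rfl⟩)
  refine ⟨A, Subalgebra.fg_def.mpr ⟨entries, hfinite, rfl⟩, fun g => ?_⟩
  exact Submonoid.closure_le.mpr hgenerators (hS ▸ Submonoid.mem_top g)

/-- The entrywise product of a family of matrix representations, as a single representation over
the ring of functions on the index set. -/
def piRepresentation {I M n R : Type*} [Monoid M] [Fintype n] [DecidableEq n] [Semiring R]
    (φ : I → M →* Matrix n n R) : M →* Matrix n n (I → R) where
  toFun g := Matrix.of fun a b i => φ i g a b
  map_one' := by ext a b i; by_cases h : a = b <;> simp [h, Matrix.one_apply]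
  map_mul' g h := by ext a b i; simp [Matrix.mul_apply]

theorem exists_noetherianSpace_isClosed_setOf_apply_eq {I M n R : Type*} [Monoid M] [Monoid.FG M]
    [Fintype n] [DecidableEq n] [CommRing R] [IsDomain R] (φ : I → M →* Matrix n n R) :
    ∃ _ : TopologicalSpace I, NoetherianSpace I ∧ ∀ g h, IsClosed {i | φ i g = φ i h} := by
  obtain ⟨A, hA, hmem⟩ := exists_fg_subalgebra_forall_apply_mem ℤ (piRepresentation φ)
  have : IsNoetherianRing A.toSubring := isNoetherianRing_of_fg hA
  obtain ⟨_, hnoetherian, hclosed⟩ := exists_noetherianSpace_isClosed_zeros A.toSubring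
  refine ⟨_, hnoetherian, fun g h => ?_⟩
  have hinter : {i | φ i g = φ i h} =
      ⋂ (a) (b), {i | (piRepresentation φ g a b - piRepresentation φ h a b) i = 0} := by
    ext i
    simp [piRepresentation, sub_eq_zero, ← Matrix.ext_iff]
  rw [hinter]
  exact isClosed_iInter fun a => isClosed_iInter fun b =>
    hclosed _ (sub_mem (hmem g a b) (hmem h a b))

theorem exists_noetherianSpace_isClosed_setOf_apply_eq_one {I G : Type*} [Group G] [Group.FG G]
    (φ : I → G →* FreeGroup ℤ) :
    ∃ _ : TopologicalSpace I, NoetherianSpace I ∧ ∀ g, IsClosed {i | φ i g = 1} := by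
  let ρ : FreeGroup ℤ →* Matrix (Fin 2) (Fin 2) ℤ :=
    Matrix.SpecialLinearGroup.coeMonoidHom.comp (FreeGroup.lift parabolic)
  have hρ : Function.Injective ρ :=
    Matrix.SpecialLinearGroup.coeMonoidHom_injective.comp lift_parabolic_injective
  obtain ⟨_, hnoetherian, hclosed⟩ :=
    exists_noetherianSpace_isClosed_setOf_apply_eq fun i => ρ.comp (φ i)
  refine ⟨_, hnoetherian, fun g => ?_⟩
  simpa only [MonoidHom.comp_apply, map_one, map_eq_one_iff ρ hρ] using hclosed g 1

/-! ### Common kernels over irreducible sets -/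

section CommonKernel

variable {I G H : Type*} [Group G] [Group H]

/-- The intersection of the kernels of the members `φ i`, `i ∈ Z`, of a family of homomorphisms. -/
def commonKernel (φ : I → G →* H) (Z : Set I) : Subgroup G :=
  ⨅ i ∈ Z, (φ i).ker

instance commonKernel_normal (φ : I → G →* H) (Z : Set I) : (commonKernel φ Z).Normal :=
  Subgroup.normal_iInf_normal fun _ => Subgroup.normal_iInf_normal fun _ => inferInstance

theorem commonKernel_le_ker (φ : I → G →* H) {Z : Set I} {i : I} (hi : i ∈ Z) :
    commonKernel φ Z ≤ (φ i).ker :=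
  iInf₂_le i hi

theorem mem_commonKernel {φ : I → G →* H} {Z : Set I} {g : G} :
    g ∈ commonKernel φ Z ↔ ∀ i ∈ Z, φ i g = 1 := by
  simp only [commonKernel, Subgroup.mem_iInf, MonoidHom.mem_ker]

theorem exists_mem_forall_apply_ne_one_of_isIrreducible [TopologicalSpace I] {φ : I → G →* H}
    (hclosed : ∀ g, IsClosed {i | φ i g = 1}) {Z : Set I} (hZ : IsIrreducible Z) (s : Finset G)
    (hs : ∀ g ∈ s, g ∉ commonKernel φ Z) : ∃ i ∈ Z, ∀ g ∈ s, φ i g ≠ 1 := by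
  classical
  obtain ⟨i, hiZ, hi⟩ := isIrreducible_iff_sInter.mp hZ (s.image fun g => {i | φ i g = 1}ᶜ)
    (Finset.forall_mem_image.mpr fun g _ => (hclosed g).isOpen_compl)
    (Finset.forall_mem_image.mpr fun g hg => by
      obtain ⟨i, hiZ, hi⟩ : ∃ i ∈ Z, φ i g ≠ 1 := by
        simpa only [mem_commonKernel, not_forall, exists_prop] using hs g hg
      exact ⟨i, hiZ, hi⟩)
  exact ⟨i, hiZ, fun g hg => hi _ (Finset.mem_image_of_mem _ hg)⟩

theorem fullyResiduallyFree_quotient_commonKernel {α : Type} [TopologicalSpace I]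
    {φ : I → G →* FreeGroup α} (hclosed : ∀ g, IsClosed {i | φ i g = 1}) {Z : Set I}
    (hZ : IsIrreducible Z) : FullyResiduallyFree (G ⧸ commonKernel φ Z) := by
  classical
  intro s hs
  have hout : ∀ g ∈ s.image Quotient.out, g ∉ commonKernel φ Z :=
    Finset.forall_mem_image.mpr fun q hq hmem => hs q hq <| by
      rw [← QuotientGroup.out_eq' q, QuotientGroup.eq_one_iff]
      exact hmem
  obtain ⟨i, hiZ, hi⟩ := exists_mem_forall_apply_ne_one_of_isIrreducible hclosed hZ _ hout
  refine ⟨α, QuotientGroup.lift _ (φ i) (commonKernel_le_ker φ hiZ), fun q hq => ?_⟩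
  rw [← QuotientGroup.out_eq' q]
  exact hi _ (Finset.mem_image_of_mem _ hq)

end CommonKernel

theorem family_of_homs_factors_through_fully_residually_free_quotients_general
    {ι G : Type*} [Group G] [Group.FG G] (Ψ : Set (G →* FreeGroup ι)) :
    ∃ (k : ℕ) (N : Fin k → Subgroup G) (hN : ∀ i, (N i).Normal),
      (∀ i, letI := hN i
        Group.FG (G ⧸ N i) ∧ FullyResiduallyFree (G ⧸ N i)) ∧
      ∀ ψ ∈ Ψ, ∃ i, N i ≤ ψ.ker := by
  choose φ hφ using fun ψ : Ψ => exists_hom_freeGroup_ker_eq ℤ ψ.1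
  obtain ⟨_, _, hclosed⟩ := exists_noetherianSpace_isClosed_setOf_apply_eq_one φ
  obtain ⟨k, ⟨e⟩⟩ :=
    (NoetherianSpace.finite_irreducibleComponents (α := Ψ)).exists_equiv_fin
  refine ⟨k, fun i => commonKernel φ (e.symm i).1, fun i => inferInstance,
    fun i => ⟨inferInstance, ?_⟩, fun ψ hψ => ?_⟩
  · exact fullyResiduallyFree_quotient_commonKernel hclosed (e.symm i).2.1
  · let component : irreducibleComponents Ψ :=
      ⟨irreducibleComponent ⟨ψ, hψ⟩, irreducibleComponent_mem_irreducibleComponents _⟩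
    refine ⟨e component, ?_⟩
    simp only [e.symm_apply_apply, ← hφ ⟨ψ, hψ⟩]
    exact commonKernel_le_ker φ mem_irreducibleComponent

/-- Any family `Ψ` of homomorphisms from a finitely generated group `G` to a free group
`F` of finite rank at least 2 factors through finitely many quotients `G/Nᵢ` that are
finitely generated fully residually free groups: every `ψ ∈ Ψ` satisfies `Nᵢ ≤ ker ψ`
for some `i`. -/
theorem family_of_homs_factors_through_fully_residually_free_quotients
    (r : ℕ) (hr : 2 ≤ r) (G : Type*) [Group G] [Group.FG G]
    (Ψ : Set (G →* FreeGroup (Fin r))) :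
    ∃ (k : ℕ) (N : Fin k → Subgroup G) (hN : ∀ i, (N i).Normal),
      (∀ i, letI := hN i
        Group.FG (G ⧸ N i) ∧ FullyResiduallyFree (G ⧸ N i)) ∧
      ∀ ψ ∈ Ψ, ∃ i, N i ≤ ψ.ker :=
  family_of_homs_factors_through_fully_residually_free_quotients_general Ψ
end
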